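/- Under the assumption that there exists a constant C_σ > 0 such that ε₁ p² h_j⁻¹ / σ_j ≤ C_σ for j = 1,…,N, the norms |||·|||_p and |||·||| are equivalent on V_p^ω: there exist constants C_lb, C_ub > 0, independent of the mesh ω, of the polynomial degree p, and of ε₁, ε₂, such that C_lb |||v||| ≤ |||v|||_p ≤ C_ub |||v||| for all v = (v₀, v_b) ∈ V_p^ω. -/

import Mathlib

noncomputable section

open MeasureTheory Set

/-- A mesh `0 = x₀ < x₁ < ⋯ < x_N = 1` on the interval `I = (0,1)`. -/
structure Mesh (N : ℕ) where
  pt : Fin (N + 1) → ℝ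
  mono : StrictMono pt
  left : pt 0 = 0
  right : pt (Fin.last N) = 1

namespace Mesh

variable {N : ℕ}

/-- The left endpoint `x_{j-1}` of the `j`-th cell `I_j`. -/
def xl (m : Mesh N) (j : Fin N) : ℝ := m.pt j.castSucc

/-- The right endpoint `x_j` of the `j`-th cell `I_j`. -/
def xr (m : Mesh N) (j : Fin N) : ℝ := m.pt j.succ

/-- The width `h_j` of the `j`-th cell. -/
def width (m : Mesh N) (j : Fin N) : ℝ := m.xr j - m.xl j

end Mesh

/-- `f` coincides (everywhere) with a polynomial of degree at most `p`. -/
def IsPolyDeg (f : ℝ → ℝ) (p : ℕ) : Prop :=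
  ∃ q : Polynomial ℝ, q.natDegree ≤ p ∧ ∀ t, f t = q.eval t

/-- `D` is the weak derivative of degree `p` of the weak function with interior part `v0`
and boundary values `vl`, `vr` on the cell `(a,b)`. -/
def IsWeakDerivOn (a b : ℝ) (p : ℕ) (v0 : ℝ → ℝ) (vl vr : ℝ) (D : ℝ → ℝ) : Prop :=
  IsPolyDeg D p ∧ ∀ q : Polynomial ℝ, q.natDegree ≤ p →
    (∫ t in a..b, D t * q.eval t) =
      -(∫ t in a..b, v0 t * q.derivative.eval t) + vr * q.eval b - vl * q.eval a

/-- `D` is the (cellwise) weak derivative `D_p v` of the weak function `v = (v0, vb)`. -/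
def IsWeakDeriv {N : ℕ} (m : Mesh N) (p : ℕ) (v0 : Fin N → ℝ → ℝ)
    (vb : Fin (N + 1) → ℝ) (D : Fin N → ℝ → ℝ) : Prop :=
  ∀ j, IsWeakDerivOn (m.xl j) (m.xr j) p (v0 j) (vb j.castSucc) (vb j.succ) (D j)

/-- `D` is the weak convection derivative of degree `p` on the cell `(a,b)`,
with convection coefficient `bb`. -/
def IsWeakConvDerivOn (bb : ℝ → ℝ) (a b : ℝ) (p : ℕ) (v0 : ℝ → ℝ) (vl vr : ℝ)
    (D : ℝ → ℝ) : Prop :=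
  IsPolyDeg D p ∧ ∀ q : Polynomial ℝ, q.natDegree ≤ p →
    (∫ t in a..b, D t * q.eval t) =
      -(∫ t in a..b, v0 t * deriv (fun s => bb s * q.eval s) t)
      + vr * (bb b * q.eval b) - vl * (bb a * q.eval a)

/-- `D` is the (cellwise) weak convection derivative `D_p^c v` of `v = (v0, vb)`. -/
def IsWeakConvDeriv {N : ℕ} (m : Mesh N) (bb : ℝ → ℝ) (p : ℕ) (v0 : Fin N → ℝ → ℝ)
    (vb : Fin (N + 1) → ℝ) (D : Fin N → ℝ → ℝ) : Prop :=
  ∀ j, IsWeakConvDerivOn bb (m.xl j) (m.xr j) p (v0 j) (vb j.castSucc) (vb j.succ) (D j)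

/-- The stabilisation bilinear form `S(u,v)`. -/
def Sform {N : ℕ} (m : Mesh N) (σ : Fin N → ℝ)
    (u0 : Fin N → ℝ → ℝ) (ub : Fin (N + 1) → ℝ)
    (v0 : Fin N → ℝ → ℝ) (vb : Fin (N + 1) → ℝ) : ℝ :=
  ∑ j : Fin N, σ j * ((u0 j (m.xr j) - ub j.succ) * (v0 j (m.xr j) - vb j.succ)
    + (u0 j (m.xl j) - ub j.castSucc) * (v0 j (m.xl j) - vb j.castSucc))

/-- The convection stabilisation bilinear form `S_c(u,v)`. -/
def Scform {N : ℕ} (m : Mesh N) (ε₂ : ℝ) (bb : ℝ → ℝ)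
    (u0 : Fin N → ℝ → ℝ) (ub : Fin (N + 1) → ℝ)
    (v0 : Fin N → ℝ → ℝ) (vb : Fin (N + 1) → ℝ) : ℝ :=
  ∑ j : Fin N, ε₂ * bb (m.xr j) * (u0 j (m.xr j) - ub j.succ) * (v0 j (m.xr j) - vb j.succ)

/-- The squared jump seminorm `|v|_J²`. -/
def Jsemi2 {N : ℕ} (m : Mesh N) (ε₂ : ℝ) (bb : ℝ → ℝ)
    (v0 : Fin N → ℝ → ℝ) (vb : Fin (N + 1) → ℝ) : ℝ :=
  ∑ j : Fin N, (if j.succ = Fin.last N then (1 : ℝ) / 2 else 1) * ε₂ * bb (m.xr j) *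
    (v0 j (m.xr j) - vb j.succ) ^ 2

/-- The squared WG energy norm `|||v|||_p²`, where `Dv` is the weak derivative `D_{p-1} v`. -/
def normP2 {N : ℕ} (m : Mesh N) (ε₁ ε₂ : ℝ) (bb : ℝ → ℝ) (σ : Fin N → ℝ)
    (v0 : Fin N → ℝ → ℝ) (vb : Fin (N + 1) → ℝ) (Dv : Fin N → ℝ → ℝ) : ℝ :=
  ε₁ * (∑ j : Fin N, ∫ t in (m.xl j)..(m.xr j), (Dv j t) ^ 2)
    + (∑ j : Fin N, ∫ t in (m.xl j)..(m.xr j), (v0 j t) ^ 2)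
    + Sform m σ v0 vb v0 vb + Scform m ε₂ bb v0 vb v0 vb + Jsemi2 m ε₂ bb v0 vb

/-- The squared WG norm `|||v|||²` (with the broken classical derivative). -/
def normT2 {N : ℕ} (m : Mesh N) (ε₁ ε₂ : ℝ) (bb : ℝ → ℝ) (σ : Fin N → ℝ)
    (v0 : Fin N → ℝ → ℝ) (vb : Fin (N + 1) → ℝ) : ℝ :=
  ε₁ * (∑ j : Fin N, ∫ t in (m.xl j)..(m.xr j), (deriv (v0 j) t) ^ 2)
    + (∑ j : Fin N, ∫ t in (m.xl j)..(m.xr j), (v0 j t) ^ 2)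
    + Sform m σ v0 vb v0 vb + Scform m ε₂ bb v0 vb v0 vb + Jsemi2 m ε₂ bb v0 vb

/-- The WG bilinear form `A_p(u,v)`; `Du = D_{p-1}u`, `Dcu = D_p^c u`, `Dv = D_{p-1}v`. -/
def Aform {N : ℕ} (m : Mesh N) (ε₁ ε₂ : ℝ) (bb rr : ℝ → ℝ) (σ : Fin N → ℝ)
    (u0 : Fin N → ℝ → ℝ) (ub : Fin (N + 1) → ℝ) (Du Dcu : Fin N → ℝ → ℝ)
    (v0 : Fin N → ℝ → ℝ) (vb : Fin (N + 1) → ℝ) (Dv : Fin N → ℝ → ℝ) : ℝ :=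
  ε₁ * (∑ j : Fin N, ∫ t in (m.xl j)..(m.xr j), Du j t * Dv j t)
    + ε₂ * (∑ j : Fin N, ∫ t in (m.xl j)..(m.xr j), Dcu j t * v0 j t)
    + (∑ j : Fin N, ∫ t in (m.xl j)..(m.xr j), rr t * u0 j t * v0 j t)
    + Sform m σ u0 ub v0 vb + Scform m ε₂ bb u0 ub v0 vb

/-- `u` solves the two-parameter singularly perturbed boundary-value problem
`-ε₁ u'' + ε₂ b u' + r u = f` on `(0,1)`, `u(0) = u(1) = 0`. -/
def SolvesBVP (ε₁ ε₂ : ℝ) (bb rr ff u : ℝ → ℝ) : Prop :=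
  u 0 = 0 ∧ u 1 = 0 ∧
    ∀ x ∈ Set.Icc (0 : ℝ) 1,
      -ε₁ * deriv (deriv u) x + ε₂ * bb x * deriv u x + rr x * u x = ff x

/-- `P` is the interpolant `I y` of `y` on the cell `(a,b)`. -/
def IsInterpOn (a b : ℝ) (p : ℕ) (y P : ℝ → ℝ) : Prop :=
  IsPolyDeg P p ∧ P a = y a ∧ P b = y b ∧
    ∀ q : Polynomial ℝ, q.natDegree ≤ p →
      (∫ t in a..b, (deriv P t - deriv y t) * q.derivative.eval t) = 0

/-- `P` is the (cellwise) interpolant `I y` of `y` on the mesh `m`. -/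
def IsInterp {N : ℕ} (m : Mesh N) (p : ℕ) (y : ℝ → ℝ) (P : Fin N → ℝ → ℝ) : Prop :=
  ∀ j, IsInterpOn (m.xl j) (m.xr j) p y (P j)

/-- Glue cellwise functions into a single function on `I` (cells taken left-closed). -/
def glue {N : ℕ} (m : Mesh N) (v0 : Fin N → ℝ → ℝ) : ℝ → ℝ :=
  fun t => ∑ j : Fin N, Set.indicator (Set.Ico (m.xl j) (m.xr j)) (v0 j) t

/-- The standard penalty parameters `σ_j = ε₁ p² / h_j`. -/
def stdPen {N : ℕ} (m : Mesh N) (ε₁ : ℝ) (p : ℕ) : Fin N → ℝ :=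
  fun j => ε₁ * (p : ℝ) ^ 2 / m.width j

/-- Membership of the interior part in the broken Sobolev space `H¹(ω)`. -/
def MemM {N : ℕ} (m : Mesh N) (v0 : Fin N → ℝ → ℝ) : Prop :=
  ∀ j, DifferentiableOn ℝ (v0 j) (Set.Icc (m.xl j) (m.xr j))

/-- `(up0, upb)`, with weak derivatives `Du = D_{p-1} u_p` and `Dcu = D_p^c u_p`, is a
weak Galerkin solution of degree `p` on the mesh `m`. -/
def IsWGsol {N : ℕ} (m : Mesh N) (ε₁ ε₂ : ℝ) (bb rr ff : ℝ → ℝ) (p : ℕ)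
    (up0 : Fin N → ℝ → ℝ) (upb : Fin (N + 1) → ℝ) (Du Dcu : Fin N → ℝ → ℝ) : Prop :=
  (∀ j, IsPolyDeg (up0 j) p) ∧ upb 0 = 0 ∧ upb (Fin.last N) = 0 ∧
    IsWeakDeriv m (p - 1) up0 upb Du ∧ IsWeakConvDeriv m bb p up0 upb Dcu ∧
    ∀ (w0 : Fin N → ℝ → ℝ) (wb : Fin (N + 1) → ℝ),
      (∀ j, IsPolyDeg (w0 j) p) → wb 0 = 0 → wb (Fin.last N) = 0 →
      ∀ Dw : Fin N → ℝ → ℝ, IsWeakDeriv m (p - 1) w0 wb Dw →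
        Aform m ε₁ ε₂ bb rr (stdPen m ε₁ p) up0 upb Du Dcu w0 wb Dw
          = ∑ j : Fin N, ∫ t in (m.xl j)..(m.xr j), ff t * w0 j t

/-- Broken `L²` norm over the mesh of a cellwise-given function. -/
def brokenL2 {N : ℕ} (m : Mesh N) (f : Fin N → ℝ → ℝ) : ℝ :=
  Real.sqrt (∑ j : Fin N, ∫ t in (m.xl j)..(m.xr j), (f j t) ^ 2)

/-- `L²(a,b)` norm. -/
def intL2 (a b : ℝ) (f : ℝ → ℝ) : ℝ := Real.sqrt (∫ t in a..b, (f t) ^ 2)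

/-- Analyticity of the data: `‖g⁽ⁿ⁾‖_{∞,[0,1]} ≲ n! γ_g^n`. -/
def AnalyticData (g : ℝ → ℝ) : Prop :=
  ContDiff ℝ (⊤ : ℕ∞) g ∧ ∃ C γg : ℝ, 0 < C ∧ 0 < γg ∧
    ∀ n : ℕ, ∀ x ∈ Set.Icc (0 : ℝ) 1, |iteratedDeriv n g x| ≤ C * n.factorial * γg ^ n

/-- The characteristic values `μ₀` (`sgn = -1`) and `μ₁` (`sgn = 1`). -/
def muVal (sgn ε₁ ε₂ : ℝ) (bb rr : ℝ → ℝ) : ℝ :=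
  sInf ((fun x => (sgn * ε₂ * bb x + Real.sqrt (ε₂ ^ 2 * (bb x) ^ 2 + 4 * ε₁ * rr x))
      / (2 * ε₁)) '' Set.Icc 0 1)

def mu0 (ε₁ ε₂ : ℝ) (bb rr : ℝ → ℝ) : ℝ := muVal (-1) ε₁ ε₂ bb rr

def mu1 (ε₁ ε₂ : ℝ) (bb rr : ℝ → ℝ) : ℝ := muVal 1 ε₁ ε₂ bb rr

/-- The Spectral Boundary Layer mesh in the reaction-convection-diffusion regime. -/
def IsSBLmeshRCD {N : ℕ} (κ : ℝ) (p : ℕ) (ε₁ ε₂ : ℝ) (bb rr : ℝ → ℝ) (m : Mesh N) : Prop :=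
  ((1 : ℝ) / 2 ≤ κ * p * ε₁ ∧ N = 1) ∨
    (κ * p * ε₂ < 1 / 2 ∧ N = 3 ∧
      m.pt 1 = κ * p / mu0 ε₁ ε₂ bb rr ∧ m.pt 2 = 1 - κ * p / mu1 ε₁ ε₂ bb rr)

/-- The Spectral Boundary Layer mesh in the reaction-diffusion regime. -/
def IsSBLmeshRD {N : ℕ} (κ : ℝ) (p : ℕ) (ε₁ : ℝ) (m : Mesh N) : Prop :=
  ((1 : ℝ) / 2 ≤ κ * p * ε₁ ∧ N = 1) ∨
    (κ * p * ε₁ < 1 / 2 ∧ N = 3 ∧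
      m.pt 1 = κ * p * Real.sqrt ε₁ ∧ m.pt 2 = 1 - κ * p * Real.sqrt ε₁)

/-- The Spectral Boundary Layer mesh in the convection-diffusion regime. -/
def IsSBLmeshCD {N : ℕ} (κ : ℝ) (p : ℕ) (ε₁ : ℝ) (m : Mesh N) : Prop :=
  ((1 : ℝ) / 2 ≤ κ * p * ε₁ ∧ N = 1) ∨
    (κ * p * ε₁ ≤ 1 / 2 ∧ N = 2 ∧ m.pt 1 = 1 - κ * p * ε₁)

/-!
Write `w = D_{p-1} v - v₀'` on a cell `(a, b)` of width `h`. Integrating the definition of the weak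
derivative by parts gives `∫ w q = (v_b - v₀)(b) q(b) - (v_b - v₀)(a) q(a)` for all `q` of degree at
most `p - 1`. As `v₀` has degree at most `p`, the choice `q = w` is allowed, and the inverse trace
inequality `w(a)², w(b)² ≤ (p² / h) ‖w‖²` yields
`‖w‖² ≤ 2 (p² / h) ((v₀ - v_b)(a)² + (v₀ - v_b)(b)²)`. The assumption on the penalties turns this
into `ε₁ ‖D_{p-1} v - v₀'‖² ≤ 2 C_σ S(v, v)`, so exchanging one derivative for the other in the norm
costs at most a multiple of the stabilisation term, which both norms contain.

The trace inequality is Cauchy–Schwarz for the polynomial `K` representing `q ↦ q(b)` in `L²(a, b)`: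
one has `q(b)² ≤ ‖K‖² ‖q‖² = K(b) ‖q‖²`, and a Rodrigues formula for `K` shows `K(b) = p² / h`.
-/

section InverseTrace

open Polynomial

lemma eval_iterate_derivative_eq_zero_of_dvd {R : Type*} [CommRing R] {f : R[X]} {c : R} {k n : ℕ}
    (hkn : k < n) (hf : (X - C c) ^ n ∣ f) : (derivative^[k] f).eval c = 0 := by
  obtain ⟨g, rfl⟩ := hf
  rw [← coe_aeval_eq_eval]
  exact aeval_iterate_derivative_of_lt _ n c (p' := g) (by simp) hkn

lemma eval_iterate_derivative_X_sub_C_pow_mul {R : Type*} [CommRing R] (c : R) (n k : ℕ)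
    (g : R[X]) :
    (derivative^[n + k] ((X - C c) ^ n * g)).eval c = (n + k).factorial * (taylor c g).coeff k := by
  rw [← factorial_smul_hasseDeriv, LinearMap.smul_apply, eval_smul, nsmul_eq_mul, ← taylor_coeff,
    taylor_mul, taylor_pow]
  simp [coeff_X_pow_mul']

variable {a b : ℝ} {n : ℕ}

lemma integral_eval_derivative_mul_eval (a b : ℝ) (f q : ℝ[X]) :
    ∫ t in a..b, (derivative f).eval t * q.eval t =
      f.eval b * q.eval b - f.eval a * q.eval a
        - ∫ t in a..b, f.eval t * (derivative q).eval t := by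
  rw [intervalIntegral.integral_mul_deriv_eq_deriv_mul
    (fun t _ => f.hasDerivAt t) (fun t _ => q.hasDerivAt t)
    ((derivative f).continuous.intervalIntegrable _ _)
    ((derivative q).continuous.intervalIntegrable _ _), sub_sub_cancel]

lemma integral_iterate_derivative_mul_eq_zero {f q : ℝ[X]} (ha : (X - C a) ^ n ∣ f)
    (hb : (X - C b) ^ n ∣ f) (hq : derivative^[n] q = 0) :
    ∫ t in a..b, (derivative^[n] f).eval t * q.eval t = 0 := by
  induction n generalizing q with
  | zero =>
    obtain rfl : q = 0 := hq
    simp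
  | succ n ih =>
    rw [Function.iterate_succ_apply', integral_eval_derivative_mul_eval,
      eval_iterate_derivative_eq_zero_of_dvd n.lt_succ_self ha,
      eval_iterate_derivative_eq_zero_of_dvd n.lt_succ_self hb,
      ih (dvd_of_mul_right_dvd ha) (dvd_of_mul_right_dvd hb)
        (by rwa [Function.iterate_succ_apply] at hq)]
    simp

/-- The Riesz representer in `L²(a, b)` of the evaluation at `b`, on polynomials of degree at most
`n`, given by a Rodrigues formula. The factor `X - C a` occurs once more than `X - C b`, so that the
`n`-th derivative vanishes at `a` but not at `b`. -/
def endpointKernel (a b : ℝ) (n : ℕ) : ℝ[X] :=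
  C ((n.factorial * (b - a) ^ (n + 1))⁻¹) * derivative^[n + 1] ((X - C b) ^ n * (X - C a) ^ (n + 1))

lemma natDegree_endpointKernel_le (a b : ℝ) (n : ℕ) : (endpointKernel a b n).natDegree ≤ n := by
  have hdeg : ((X - C b) ^ n * (X - C a) ^ (n + 1)).natDegree ≤ n + (n + 1) :=
    natDegree_mul_le.trans (by simp)
  exact (natDegree_C_mul_le _ _).trans ((natDegree_iterate_derivative _ _).trans (by omega))

lemma eval_endpointKernel_right (hab : a ≠ b) (n : ℕ) :
    (endpointKernel a b n).eval b = ((n : ℝ) + 1) ^ 2 / (b - a) := by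
  have hne : b - a ≠ 0 := sub_ne_zero.mpr hab.symm
  rw [endpointKernel, eval_mul, eval_C, eval_iterate_derivative_X_sub_C_pow_mul, taylor_coeff_one,
    derivative_X_sub_C_pow, Nat.factorial_succ]
  simp only [eval_mul, eval_pow, eval_sub, eval_X, eval_C, Nat.add_sub_cancel]
  push_cast
  field_simp
  ring

lemma integral_endpointKernel_mul (hab : a ≠ b) {q : ℝ[X]} (hq : q.natDegree ≤ n) :
    ∫ t in a..b, (endpointKernel a b n).eval t * q.eval t = q.eval b := by
  have hnormalise : (n.factorial : ℝ) * (b - a) ^ (n + 1) ≠ 0 :=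
    mul_ne_zero (mod_cast n.factorial_ne_zero) (pow_ne_zero _ (sub_ne_zero.mpr hab.symm))
  set f : ℝ[X] := (X - C b) ^ n * (X - C a) ^ (n + 1)
  have hfa : (derivative^[n] f).eval a = 0 :=
    eval_iterate_derivative_eq_zero_of_dvd n.lt_succ_self (dvd_mul_left _ _)
  have hfb : (derivative^[n] f).eval b = n.factorial * (b - a) ^ (n + 1) := by
    have h := eval_iterate_derivative_X_sub_C_pow_mul b n 0 ((X - C a) ^ (n + 1))
    rw [taylor_coeff_zero] at h
    simpa using h
  have horth : ∫ t in a..b, (derivative^[n] f).eval t * (derivative q).eval t = 0 := by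
    refine integral_iterate_derivative_mul_eq_zero
      (dvd_mul_of_dvd_right (pow_dvd_pow _ n.le_succ) _) (dvd_mul_right _ _) ?_
    rw [← Function.iterate_succ_apply]
    exact iterate_derivative_eq_zero (Nat.lt_succ_of_le hq)
  simp only [endpointKernel, eval_mul, eval_C, mul_assoc, intervalIntegral.integral_const_mul]
  rw [Function.iterate_succ_apply', integral_eval_derivative_mul_eval, horth, hfa, hfb, zero_mul,
    sub_zero, sub_zero, ← mul_assoc, inv_mul_cancel₀ hnormalise, one_mul]

lemma sq_eval_right_le_integral_sq (hab : a < b) {q : ℝ[X]} (hq : q.natDegree ≤ n) :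
    q.eval b ^ 2 ≤ ((n : ℝ) + 1) ^ 2 / (b - a) * ∫ t in a..b, q.eval t ^ 2 := by
  set K := endpointKernel a b n
  set κ : ℝ := ((n : ℝ) + 1) ^ 2 / (b - a)
  have hκ : 0 < κ := div_pos (by positivity) (sub_pos.mpr hab)
  have hKK : ∫ t in a..b, K.eval t * K.eval t = κ :=
    (integral_endpointKernel_mul hab.ne (natDegree_endpointKernel_le a b n)).trans
      (eval_endpointKernel_right hab.ne n)
  have hKq : ∫ t in a..b, K.eval t * q.eval t = q.eval b := integral_endpointKernel_mul hab.ne hq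
  have hexpand : ∫ t in a..b, (κ * q.eval t - q.eval b * K.eval t) ^ 2 =
      κ * (κ * (∫ t in a..b, q.eval t ^ 2) - q.eval b ^ 2) := by
    have hpoint (t : ℝ) : (κ * q.eval t - q.eval b * K.eval t) ^ 2 = κ ^ 2 * q.eval t ^ 2
        - 2 * κ * q.eval b * (K.eval t * q.eval t) + q.eval b ^ 2 * (K.eval t * K.eval t) := by
      ring
    simp only [hpoint]
    rw [intervalIntegral.integral_add, intervalIntegral.integral_sub]
    · simp only [intervalIntegral.integral_const_mul, hKK, hKq]
      ring
    all_goals exact Continuous.intervalIntegrable (by fun_prop) _ _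
  have hnonneg : 0 ≤ κ * (κ * (∫ t in a..b, q.eval t ^ 2) - q.eval b ^ 2) := by
    rw [← hexpand]
    exact intervalIntegral.integral_nonneg hab.le fun _ _ => sq_nonneg _
  exact sub_nonneg.mp (nonneg_of_mul_nonneg_right hnonneg hκ)

lemma sq_eval_left_le_integral_sq (hab : a < b) {q : ℝ[X]} (hq : q.natDegree ≤ n) :
    q.eval a ^ 2 ≤ ((n : ℝ) + 1) ^ 2 / (b - a) * ∫ t in a..b, q.eval t ^ 2 := by
  have hreflect : (q.comp (-X)).natDegree ≤ n := by simpa [natDegree_comp] using hq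
  have h := sq_eval_right_le_integral_sq (neg_lt_neg hab) hreflect
  simpa [intervalIntegral.integral_comp_neg fun t => q.eval t ^ 2, neg_add_eq_sub] using h

lemma integral_sq_le_of_integral_sq_eq_boundary (hab : a < b) {w : ℝ[X]} (hw : w.natDegree ≤ n)
    {α β : ℝ} (h : ∫ t in a..b, w.eval t ^ 2 = α * w.eval b + β * w.eval a) :
    ∫ t in a..b, w.eval t ^ 2 ≤ 2 * (((n : ℝ) + 1) ^ 2 / (b - a)) * (α ^ 2 + β ^ 2) := by
  have hright := sq_eval_right_le_integral_sq hab hw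
  have hleft := sq_eval_left_le_integral_sq hab hw
  set κ : ℝ := ((n : ℝ) + 1) ^ 2 / (b - a)
  have hκ : 0 ≤ κ := div_nonneg (by positivity) (sub_nonneg.mpr hab.le)
  set W := ∫ t in a..b, w.eval t ^ 2
  have hW : 0 ≤ W := intervalIntegral.integral_nonneg hab.le fun t _ => sq_nonneg _
  rcases hW.eq_or_lt with hW0 | hWpos
  · rw [← hW0]
    exact mul_nonneg (mul_nonneg zero_le_two hκ) (add_nonneg (sq_nonneg _) (sq_nonneg _))
  refine le_of_mul_le_mul_right ?_ hWpos
  calc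
    W * W = (α * w.eval b + β * w.eval a) ^ 2 := by rw [h, sq]
    _ ≤ (α ^ 2 + β ^ 2) * (w.eval b ^ 2 + w.eval a ^ 2) := by
      linarith [sq_nonneg (α * w.eval a - β * w.eval b)]
    _ ≤ (α ^ 2 + β ^ 2) * (κ * W + κ * W) := by gcongr
    _ = 2 * κ * (α ^ 2 + β ^ 2) * W := by ring

end InverseTrace

section Cell

variable {f D v0 : ℝ → ℝ} {a b vl vr : ℝ} {n : ℕ}

lemma IsPolyDeg.deriv (hf : IsPolyDeg f n) : IsPolyDeg (deriv f) (n - 1) := by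
  obtain ⟨q, hq, hfq⟩ := hf
  obtain rfl : f = q.eval := funext hfq
  exact ⟨q.derivative, (Polynomial.natDegree_derivative_le q).trans (Nat.sub_le_sub_right hq 1),
    fun _ => q.deriv⟩

lemma IsPolyDeg.differentiable (hf : IsPolyDeg f n) : Differentiable ℝ f := by
  obtain ⟨q, -, hfq⟩ := hf
  obtain rfl : f = q.eval := funext hfq
  exact q.differentiable

lemma IsPolyDeg.memLp_two (hf : IsPolyDeg f n) (a b : ℝ) :
    MemLp f 2 (volume.restrict (Ioc a b)) :=
  have hcont : Continuous f := hf.differentiable.continuous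
  (memLp_two_iff_integrable_sq hcont.aestronglyMeasurable).mpr (hcont.pow 2).integrableOn_Ioc

lemma IsWeakDerivOn.integral_sub_mul {v0' : ℝ → ℝ} (hD : IsWeakDerivOn a b n v0 vl vr D)
    (hv : ∀ t ∈ uIcc a b, HasDerivAt v0 (v0' t) t) (hv' : IntervalIntegrable v0' volume a b)
    {q : Polynomial ℝ} (hq : q.natDegree ≤ n) :
    ∫ t in a..b, (D t - v0' t) * q.eval t =
      (vr - v0 b) * q.eval b + (v0 a - vl) * q.eval a := by
  have hDcont : Continuous D := hD.1.differentiable.continuous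
  have hparts := intervalIntegral.integral_mul_deriv_eq_deriv_mul hv (fun t _ => q.hasDerivAt t) hv'
    (q.derivative.continuous.intervalIntegrable _ _)
  have hint : IntervalIntegrable (fun t => v0' t * q.eval t) volume a b :=
    hv'.mul_continuousOn q.continuous.continuousOn
  simp only [sub_mul]
  rw [intervalIntegral.integral_sub (Continuous.intervalIntegrable (by fun_prop) _ _) hint,
    hD.2 q hq, hparts]
  ring

lemma IsWeakDerivOn.integral_sub_deriv_sq_le (hab : a < b) (hv : IsPolyDeg v0 (n + 1))
    (hD : IsWeakDerivOn a b n v0 vl vr D) :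
    ∫ t in a..b, (D t - deriv v0 t) ^ 2 ≤
      2 * (((n : ℝ) + 1) ^ 2 / (b - a)) * ((v0 b - vr) ^ 2 + (v0 a - vl) ^ 2) := by
  obtain ⟨u, hu, hvu⟩ := hv.deriv
  obtain ⟨d, hd, hDd⟩ := hD.1
  have hw : (d - u).natDegree ≤ n := (Polynomial.natDegree_sub_le d u).trans (max_le hd hu)
  have hwD (t : ℝ) : D t - deriv v0 t = (d - u).eval t := by
    rw [hDd, hvu, Polynomial.eval_sub]
  have hboundary := hD.integral_sub_mul (fun t _ => (hv.differentiable t).hasDerivAt)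
    (hv.deriv.differentiable.continuous.intervalIntegrable _ _) hw
  simp only [hwD, ← sq] at hboundary ⊢
  rw [sub_sq_comm (v0 b)]
  exact integral_sq_le_of_integral_sq_eq_boundary hab hw hboundary

end Cell

lemma integral_sq_le_two_mul_add {α : Type*} {mα : MeasurableSpace α} {μ : Measure α} {f g : α → ℝ}
    (hf : MemLp f 2 μ) (hg : MemLp g 2 μ) :
    ∫ x, f x ^ 2 ∂μ ≤ 2 * (∫ x, (f x - g x) ^ 2 ∂μ + ∫ x, g x ^ 2 ∂μ) := by
  have hfg : Integrable (fun x => (f x - g x) ^ 2) μ := (hf.sub hg).integrable_sq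
  rw [← integral_add hfg hg.integrable_sq, ← integral_const_mul]
  refine integral_mono hf.integrable_sq ((hfg.add hg.integrable_sq).const_mul 2) fun x => ?_
  simpa only [sub_add_cancel] using add_sq_le (a := f x - g x) (b := g x)

namespace Mesh

variable {N : ℕ} (m : Mesh N) (j : Fin N)

lemma xl_lt_xr : m.xl j < m.xr j :=
  m.mono Fin.castSucc_lt_succ

lemma xr_mem_Icc : m.xr j ∈ Icc (0 : ℝ) 1 :=
  ⟨m.left ▸ m.mono.monotone (Fin.zero_le _), m.right ▸ m.mono.monotone (Fin.le_last _)⟩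

lemma sum_integral_sq_nonneg (F : Fin N → ℝ → ℝ) :
    0 ≤ ∑ j, ∫ t in (m.xl j)..(m.xr j), F j t ^ 2 :=
  Finset.sum_nonneg fun j _ =>
    intervalIntegral.integral_nonneg (m.xl_lt_xr j).le fun _ _ => sq_nonneg _

lemma sum_integral_sq_le_two_mul_add {F G : Fin N → ℝ → ℝ}
    (hF : ∀ j, MemLp (F j) 2 (volume.restrict (Ioc (m.xl j) (m.xr j))))
    (hG : ∀ j, MemLp (G j) 2 (volume.restrict (Ioc (m.xl j) (m.xr j)))) :
    ∑ j, ∫ t in (m.xl j)..(m.xr j), F j t ^ 2 ≤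
      2 * ((∑ j, ∫ t in (m.xl j)..(m.xr j), (F j t - G j t) ^ 2)
        + ∑ j, ∫ t in (m.xl j)..(m.xr j), G j t ^ 2) := by
  rw [← Finset.sum_add_distrib, Finset.mul_sum]
  refine Finset.sum_le_sum fun j _ => ?_
  simp only [intervalIntegral.integral_of_le (m.xl_lt_xr j).le]
  exact integral_sq_le_two_mul_add (hF j) (hG j)

end Mesh

section Norms

variable {N : ℕ} {m : Mesh N} {n : ℕ} {bb : ℝ → ℝ} {ε₁ ε₂ Cσ : ℝ} {σ : Fin N → ℝ}
  {v0 F G : Fin N → ℝ → ℝ} {vb : Fin (N + 1) → ℝ}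

lemma Sform_self (m : Mesh N) (σ : Fin N → ℝ) (v0 : Fin N → ℝ → ℝ) (vb : Fin (N + 1) → ℝ) :
    Sform m σ v0 vb v0 vb = ∑ j, σ j *
      ((v0 j (m.xr j) - vb j.succ) ^ 2 + (v0 j (m.xl j) - vb j.castSucc) ^ 2) := by
  simp only [Sform, sq]

lemma Sform_self_nonneg (hσ : ∀ j, 0 ≤ σ j) : 0 ≤ Sform m σ v0 vb v0 vb := by
  rw [Sform_self]
  exact Finset.sum_nonneg fun j _ => mul_nonneg (hσ j) (by positivity)

lemma Scform_self_nonneg (hε₂ : 0 ≤ ε₂) (hb : ∀ j, 0 ≤ bb (m.xr j)) :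
    0 ≤ Scform m ε₂ bb v0 vb v0 vb :=
  Finset.sum_nonneg fun j _ => by
    rw [mul_assoc]
    exact mul_nonneg (mul_nonneg hε₂ (hb j)) (mul_self_nonneg _)

lemma Jsemi2_nonneg (hε₂ : 0 ≤ ε₂) (hb : ∀ j, 0 ≤ bb (m.xr j)) : 0 ≤ Jsemi2 m ε₂ bb v0 vb :=
  Finset.sum_nonneg fun j _ => by
    have := hb j
    split_ifs <;> positivity

lemma normT2_eq_normP2_deriv :
    normT2 m ε₁ ε₂ bb σ v0 vb = normP2 m ε₁ ε₂ bb σ v0 vb fun j => deriv (v0 j) :=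
  rfl

lemma normP2_le_mul_normP2 {c : ℝ} (hc : 0 ≤ c) (hε₁ : 0 ≤ ε₁) (hε₂ : 0 ≤ ε₂)
    (hb : ∀ j, 0 ≤ bb (m.xr j)) (hσ : ∀ j, 0 ≤ σ j)
    (hF : ∀ j, MemLp (F j) 2 (volume.restrict (Ioc (m.xl j) (m.xr j))))
    (hG : ∀ j, MemLp (G j) 2 (volume.restrict (Ioc (m.xl j) (m.xr j))))
    (hFG : ε₁ * ∑ j, ∫ t in (m.xl j)..(m.xr j), (F j t - G j t) ^ 2 ≤
      c * Sform m σ v0 vb v0 vb) :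
    normP2 m ε₁ ε₂ bb σ v0 vb F ≤ 2 * (1 + c) * normP2 m ε₁ ε₂ bb σ v0 vb G := by
  have hS : 0 ≤ Sform m σ v0 vb v0 vb := Sform_self_nonneg hσ
  have hSc : 0 ≤ Scform m ε₂ bb v0 vb v0 vb := Scform_self_nonneg hε₂ hb
  have hJ : 0 ≤ Jsemi2 m ε₂ bb v0 vb := Jsemi2_nonneg hε₂ hb
  have hL2 := m.sum_integral_sq_nonneg v0
  have hderiv := mul_nonneg hε₁ (m.sum_integral_sq_nonneg G)
  have htriangle := mul_le_mul_of_nonneg_left (m.sum_integral_sq_le_two_mul_add hF hG) hε₁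
  unfold normP2
  linarith [mul_nonneg hc hL2, mul_nonneg hc hSc, mul_nonneg hc hJ, mul_nonneg hc hderiv]

lemma IsWeakDeriv.mul_sum_integral_sub_deriv_sq_le {Dv : Fin N → ℝ → ℝ} (hε₁ : 0 ≤ ε₁)
    (hσ : ∀ j, ε₁ * ((n : ℝ) + 1) ^ 2 / m.width j ≤ Cσ * σ j)
    (hv : ∀ j, IsPolyDeg (v0 j) (n + 1)) (hD : IsWeakDeriv m n v0 vb Dv) :
    ε₁ * ∑ j, ∫ t in (m.xl j)..(m.xr j), (Dv j t - deriv (v0 j) t) ^ 2 ≤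
      2 * Cσ * Sform m σ v0 vb v0 vb := by
  rw [Sform_self, Finset.mul_sum, Finset.mul_sum]
  refine Finset.sum_le_sum fun j _ => ?_
  set M := (v0 j (m.xr j) - vb j.succ) ^ 2 + (v0 j (m.xl j) - vb j.castSucc) ^ 2
  calc
    _ ≤ ε₁ * (2 * (((n : ℝ) + 1) ^ 2 / m.width j) * M) :=
      mul_le_mul_of_nonneg_left ((hD j).integral_sub_deriv_sq_le (m.xl_lt_xr j) (hv j)) hε₁
    _ = 2 * (ε₁ * ((n : ℝ) + 1) ^ 2 / m.width j) * M := by ring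
    _ ≤ 2 * (Cσ * σ j) * M := by gcongr; exact hσ j
    _ = 2 * Cσ * (σ j * M) := by ring

end Norms

theorem statement0_general {N : ℕ} (m : Mesh N) {bb : ℝ → ℝ} (hb : ∀ j, 0 ≤ bb (m.xr j))
    {ε₁ ε₂ Cσ : ℝ} (hε₁ : 0 ≤ ε₁) (hε₂ : 0 ≤ ε₂) (hCσ : 0 ≤ Cσ) {p : ℕ} (hp : 1 ≤ p)
    {σ : Fin N → ℝ} (hσ : ∀ j, 0 < σ j) (hσC : ∀ j, ε₁ * (p : ℝ) ^ 2 / m.width j / σ j ≤ Cσ)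
    {v0 : Fin N → ℝ → ℝ} {vb : Fin (N + 1) → ℝ} (hv : ∀ j, IsPolyDeg (v0 j) p)
    {Dv : Fin N → ℝ → ℝ} (hD : IsWeakDeriv m (p - 1) v0 vb Dv) :
    (√(2 * (1 + 2 * Cσ)))⁻¹ * √(normT2 m ε₁ ε₂ bb σ v0 vb) ≤ √(normP2 m ε₁ ε₂ bb σ v0 vb Dv) ∧
      √(normP2 m ε₁ ε₂ bb σ v0 vb Dv) ≤
        √(2 * (1 + 2 * Cσ)) * √(normT2 m ε₁ ε₂ bb σ v0 vb) := by
  obtain ⟨n, rfl⟩ := Nat.exists_eq_add_of_le' hp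
  have hpenalty (j) : ε₁ * ((n : ℝ) + 1) ^ 2 / m.width j ≤ Cσ * σ j := by
    simpa using (div_le_iff₀ (hσ j)).mp (hσC j)
  have hdiff := hD.mul_sum_integral_sub_deriv_sq_le hε₁ hpenalty hv
  have hDL2 (j) := (hD j).1.memLp_two (m.xl j) (m.xr j)
  have hvL2 (j) := (hv j).deriv.memLp_two (m.xl j) (m.xr j)
  have hc : 0 ≤ 2 * Cσ := by positivity
  have hupper := normP2_le_mul_normP2 hc hε₁ hε₂ hb (fun j => (hσ j).le) hDL2 hvL2 hdiff
  have hlower := normP2_le_mul_normP2 hc hε₁ hε₂ hb (fun j => (hσ j).le) hvL2 hDL2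
    (by simpa only [sub_sq_comm] using hdiff)
  rw [inv_mul_le_iff₀ (by positivity), ← Real.sqrt_mul (by positivity),
    ← Real.sqrt_mul (by positivity), normT2_eq_normP2_deriv]
  exact ⟨Real.sqrt_le_sqrt hlower, Real.sqrt_le_sqrt hupper⟩

/-- Equivalence of the WG norms `|||·|||_p` and `|||·|||` on `V_p^ω`,
uniformly in the mesh, the polynomial degree and the perturbation parameters, provided
`ε₁ p² h_j⁻¹ / σ_j ≤ C_σ`. -/
theorem statement0 (bb : ℝ → ℝ) (hb : Continuous bb)
    (hbpos : ∀ x ∈ Set.Icc (0 : ℝ) 1, 0 < bb x)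
    (Cσ : ℝ) (hCσ : 0 < Cσ) :
    ∃ Clb Cub : ℝ, 0 < Clb ∧ 0 < Cub ∧
      ∀ ε₁ ε₂ : ℝ, ε₁ ∈ Set.Ioc (0 : ℝ) 1 → ε₂ ∈ Set.Ioc (0 : ℝ) 1 →
      ∀ (N : ℕ) (m : Mesh N) (p : ℕ), 1 ≤ p →
      ∀ σ : Fin N → ℝ, (∀ j, 0 < σ j) →
        (∀ j, ε₁ * (p : ℝ) ^ 2 / m.width j / σ j ≤ Cσ) →
      ∀ (v0 : Fin N → ℝ → ℝ) (vb : Fin (N + 1) → ℝ), (∀ j, IsPolyDeg (v0 j) p) →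
      ∀ Dv : Fin N → ℝ → ℝ, IsWeakDeriv m (p - 1) v0 vb Dv →
        Clb * Real.sqrt (normT2 m ε₁ ε₂ bb σ v0 vb)
            ≤ Real.sqrt (normP2 m ε₁ ε₂ bb σ v0 vb Dv) ∧
          Real.sqrt (normP2 m ε₁ ε₂ bb σ v0 vb Dv)
            ≤ Cub * Real.sqrt (normT2 m ε₁ ε₂ bb σ v0 vb) := by
  exact ⟨(√(2 * (1 + 2 * Cσ)))⁻¹, √(2 * (1 + 2 * Cσ)), by positivity, by positivity,
    fun ε₁ ε₂ hε₁ hε₂ N m p hp σ hσ hσC v0 vb hv Dv hD =>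
      statement0_general m (fun j => (hbpos _ (m.xr_mem_Icc j)).le) hε₁.1.le hε₂.1.le hCσ.le hp hσ
        hσC hv hD⟩
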